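/- arXiv:2206.11735 — 2 statements merged into one kernel-verified Lean document; each statement's English description precedes it below -/
import Mathlib

section
/- Let (A, B) be a controllable pair of constant matrices with A ∈ ℝ^{n×n} and B ∈ ℝ^{n×p}, and let Σ₀, Σ₁ be symmetric positive definite n×n matrices. Let M, ν be of class C^{max(n−2,0)} on [0,1] with M(t) symmetric positive semidefinite and ν(t) ≥ 0 on [0,1]. Then there exists a continuous K : [0,1] → ℝ^{p×n} such that the solution of the matrix differential equation Σ'(t) = (A + BK(t))Σ + Σ(A + BK(t))ᵀ + M(t) + 2ν(t)Σ with Σ(0) = Σ₀ satisfies Σ(t) ≻ 0 (symmetric positive definite) for all t ∈ [0,1] and Σ(1) = Σ₁. -/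
/-!
With `U = K S` the covariance equation `S' = A S + S Aᵀ + B U + (B U)ᵀ + M + 2 ν S` is linear in
`(S, U)`, and any continuous `U` along a positive definite path `S` gives back the continuous gain
`K = U S⁻¹`. So it suffices to find a positive definite path together with such a `U`, and then to
invoke uniqueness for the linear equation (`lyapunov_unique`).

Conjugation by `exp (-∫ν) exp (-tA)` removes `A` and `ν`: the equation becomes
`Z' = b(t) u + (b(t) u)ᵀ + Q(t)`, where `b(t) = exp (-tA) B` and `Q ≥ 0` is continuous. Let `T` be the
transformed target. For `c < 1` close enough to `1`, the matrix `R₁ = T - ∫_c^1 Q` is positive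
definite. Put `R₀ = Sig0 + ∫_0^c Q`, let `G(t) = ∫_c^t w b bᵀ` be the Gramian with the weight
`w(s) = max 0 (s - c)`, and let `P(t) = G(t) G(1)⁻¹`. The path is

  `Z(t) = (1 - P) R₀ (1 - P)ᵀ + P R₁ Pᵀ + ∫_c^t Q`.

Up to time `c` no control acts, `P = 0` and `Z(t) = Sig0 + ∫_0^t Q`. After `c`, controllability makes
`G(t)`, hence `P(t)`, invertible (`gram_posDef`), so `P R₁ Pᵀ` is positive definite while the other
two terms are positive semidefinite. At time `1`, `P = 1` and `Z = T`. As `P' = w b bᵀ G(1)⁻¹` has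
`b` as its left factor, `Z' - Q` has the required form, with a control that is continuous because
`w` vanishes at `c`.
-/

open Matrix

/-- The controllability matrix `[B AB A²B ⋯ A^{n−1}B]` of a constant pair `(A, B)`. -/
def ctrbConstMat {n p : ℕ} (A : Matrix (Fin n) (Fin n) ℝ) (B : Matrix (Fin n) (Fin p) ℝ) :
    Matrix (Fin n) (Fin n × Fin p) ℝ :=
  Matrix.of fun i kj => (A ^ (kj.1 : ℕ) * B) i kj.2

section Steering
open scoped Matrix.Norms.Operator
open Set

/-! ### Calculus and positivity of matrix-valued functions -/

theorem hasDerivAt_linear {n : ℕ} {F : Type*} [NormedAddCommGroup F] [NormedSpace ℝ F]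
    (L : Matrix (Fin n) (Fin n) ℝ →ₗ[ℝ] F) {f : ℝ → Matrix (Fin n) (Fin n) ℝ}
    {f' : Matrix (Fin n) (Fin n) ℝ} {t : ℝ} (hf : HasDerivAt f f' t) :
    HasDerivAt (fun s => L (f s)) (L f') t :=
  (LinearMap.toContinuousLinearMap L).hasFDerivAt.comp_hasDerivAt t hf

theorem hasDerivAt_transpose {n : ℕ} {f : ℝ → Matrix (Fin n) (Fin n) ℝ}
    {f' : Matrix (Fin n) (Fin n) ℝ} {t : ℝ} (hf : HasDerivAt f f' t) :
    HasDerivAt (fun s => (f s)ᵀ) f'ᵀ t :=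
  hasDerivAt_linear (Matrix.transposeLinearEquiv (Fin n) (Fin n) ℝ ℝ).toLinearMap hf

theorem hasDerivAt_quad {n : ℕ} (x : Fin n → ℝ) {f : ℝ → Matrix (Fin n) (Fin n) ℝ}
    {f' : Matrix (Fin n) (Fin n) ℝ} {t : ℝ} (hf : HasDerivAt f f' t) :
    HasDerivAt (fun s => x ⬝ᵥ f s *ᵥ x) (x ⬝ᵥ f' *ᵥ x) t := by
  let L : Matrix (Fin n) (Fin n) ℝ →ₗ[ℝ] ℝ :=
    { toFun := fun m => x ⬝ᵥ m *ᵥ x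
      map_add' := fun a b => by simp [Matrix.add_mulVec]
      map_smul' := fun c a => by simp [Matrix.smul_mulVec] }
  exact hasDerivAt_linear L hf

theorem hasDerivAt_integral {n : ℕ} {f : ℝ → Matrix (Fin n) (Fin n) ℝ} (hf : Continuous f)
    (a t : ℝ) : HasDerivAt (fun u => ∫ s in a..u, f s) (f t) t :=
  (hf.integral_hasStrictDerivAt a t).hasDerivAt

theorem transpose_integral {n : ℕ} {f : ℝ → Matrix (Fin n) (Fin n) ℝ} (hf : Continuous f)
    (hs : ∀ t, (f t)ᵀ = f t) (a b : ℝ) : (∫ s in a..b, f s)ᵀ = ∫ s in a..b, f s := by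
  let L := LinearMap.toContinuousLinearMap
    (Matrix.transposeLinearEquiv (Fin n) (Fin n) ℝ ℝ).toLinearMap
  have h := L.intervalIntegral_comp_comm (hf.intervalIntegrable (μ := MeasureTheory.volume) a b)
  have h2 : (fun s => L (f s)) = f := funext hs
  exact h.symm.trans (congrArg (fun g => ∫ s in a..b, g s) h2)

theorem posSemidef_integral {n : ℕ} {f : ℝ → Matrix (Fin n) (Fin n) ℝ} (hf : Continuous f)
    (hp : ∀ t, (f t).PosSemidef) {a b : ℝ} (hab : a ≤ b) : (∫ s in a..b, f s).PosSemidef := by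
  refine .of_dotProduct_mulVec_nonneg ?_ fun x => ?_
  · rw [IsHermitian, conjTranspose_eq_transpose_of_trivial]
    exact transpose_integral hf (fun t => by
      simpa [IsHermitian, conjTranspose_eq_transpose_of_trivial] using (hp t).isHermitian) a b
  · have hd := fun t => hasDerivAt_quad x (hasDerivAt_integral hf a t)
    have hm : Monotone fun u => x ⬝ᵥ (∫ s in a..u, f s) *ᵥ x :=
      monotone_of_hasDerivAt_nonneg hd fun t => by
        simpa using (hp t).dotProduct_mulVec_nonneg x
    simpa using hm hab

/-- Positive definiteness is an open condition along a continuous path of symmetric matrices. -/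
theorem eventually_posDef {n : ℕ} {S : ℝ → Matrix (Fin n) (Fin n) ℝ} (hS : Continuous S)
    (hsymm : ∀ t, (S t)ᵀ = S t) {c : ℝ} (hc : (S c).PosDef) :
    ∀ᶠ t in nhds c, (S t).PosDef := by
  have hcont : Continuous fun z : ℝ × (Fin n → ℝ) => z.2 ⬝ᵥ S z.1 *ᵥ z.2 := by fun_prop
  have key : ∀ᶠ t in nhds c, ∀ x ∈ Metric.sphere (0 : Fin n → ℝ) 1, 0 < x ⬝ᵥ S t *ᵥ x := by
    refine (isCompact_sphere _ _).eventually_forall_of_forall_eventually fun x hx => ?_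
    refine hcont.continuousAt.eventually (lt_mem_nhds ?_)
    have hx0 : x ≠ 0 := ne_zero_of_mem_unit_sphere (⟨x, hx⟩ : Metric.sphere (0 : Fin n → ℝ) 1)
    simpa using hc.dotProduct_mulVec_pos hx0
  filter_upwards [key] with t ht
  refine .of_dotProduct_mulVec_pos ?_ fun x hx => ?_
  · simpa [IsHermitian, conjTranspose_eq_transpose_of_trivial] using hsymm t
  · have hx' : 0 < ‖x‖ := norm_pos_iff.2 hx
    have h1 := ht (‖x‖⁻¹ • x) (by simp [norm_smul, hx'.ne'])
    simp only [mulVec_smul, smul_dotProduct, dotProduct_smul, smul_eq_mul] at h1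
    have h2 : 0 < ‖x‖⁻¹ := inv_pos.2 hx'
    rw [← mul_assoc] at h1
    simpa using pos_of_mul_pos_right h1 (by positivity)

/-! ### Controllability and the weighted Gramian -/

/-- Full rank of the controllability matrix means that no nonzero row vector annihilates all the
products `A ^ k * B`. -/
theorem eq_zero_of_ctrb {n p : ℕ} {A : Matrix (Fin n) (Fin n) ℝ} {B : Matrix (Fin n) (Fin p) ℝ}
    (hctrb : (ctrbConstMat A B).rank = n) (y : Fin n → ℝ)
    (hy : ∀ k : ℕ, y ᵥ* (A ^ k * B) = 0) : y = 0 := by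
  have hinj : Function.Injective (ctrbConstMat A B)ᵀ.mulVec := by
    rw [mulVec_injective_iff]
    have : LinearIndependent ℝ (ctrbConstMat A B).row := by
      rw [linearIndependent_iff_card_eq_finrank_span]
      rw [Set.finrank, ← rank_eq_finrank_span_row, hctrb]; simp
    exact this
  apply hinj
  rw [mulVec_zero]
  ext ⟨k, j⟩
  rw [mulVec_transpose]
  exact congrFun (hy k) j

/-- For a controllable pair, `x ᵥ* (exp (-s A) * B)` cannot vanish on an interval unless `x = 0`:
differentiating in `s` gives `x ᵥ* (exp (-s A) * A ^ k * B) = 0` for every `k`. -/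
theorem eq_zero_of_exp {n p : ℕ} {A : Matrix (Fin n) (Fin n) ℝ} {B : Matrix (Fin n) (Fin p) ℝ}
    (hctrb : (ctrbConstMat A B).rank = n) (x : Fin n → ℝ) {c d : ℝ} (hcd : c < d)
    (hx : ∀ s ∈ Ioo c d, x ᵥ* (NormedSpace.exp (s • -A) * B) = 0) : x = 0 := by
  have hk : ∀ k : ℕ, ∀ s ∈ Ioo c d, x ᵥ* (NormedSpace.exp (s • -A) * (A ^ k * B)) = 0 := by
    intro k
    induction k with
    | zero => simpa using hx
    | succ k ih =>
      intro s hs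
      let L : Matrix (Fin n) (Fin n) ℝ →ₗ[ℝ] (Fin p → ℝ) :=
        { toFun := fun m => x ᵥ* (m * (A ^ k * B))
          map_add' := fun a b => by simp [Matrix.add_mul, Matrix.vecMul_add]
          map_smul' := fun c a => by simp [Matrix.vecMul_smul] }
      have h1 := hasDerivAt_linear L (hasDerivAt_exp_smul_const (𝕂 := ℝ) (-A) s)
      have h2 : (fun s => L (NormedSpace.exp (s • -A))) =ᶠ[nhds s] fun _ => 0 := by
        filter_upwards [Ioo_mem_nhds hs.1 hs.2] with u hu using ih u hu
      have h3 := h1.unique ((hasDerivAt_const s (0 : Fin p → ℝ)).congr_of_eventuallyEq h2)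
      have h4 : x ᵥ* ((NormedSpace.exp (s • -A) * -A) * (A ^ k * B)) = 0 := h3
      rw [pow_succ', Matrix.mul_assoc A]
      simpa [Matrix.mul_assoc, Matrix.vecMul_neg] using h4
  obtain ⟨s, hs⟩ := nonempty_Ioo.2 hcd
  have h0 := eq_zero_of_ctrb hctrb (x ᵥ* NormedSpace.exp (s • -A)) fun k => by
    rw [Matrix.vecMul_vecMul]; exact hk k s hs
  have hu : IsUnit (NormedSpace.exp (s • -A)) := Matrix.isUnit_exp _
  exact Matrix.vecMul_injective_of_isUnit hu (by simpa using h0)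

/-- The controllability Gramian weighted by `s ↦ max 0 (s - c)` is positive definite at every time
after `c`. -/
theorem gram_posDef {n p : ℕ} {A : Matrix (Fin n) (Fin n) ℝ} {B : Matrix (Fin n) (Fin p) ℝ}
    (hctrb : (ctrbConstMat A B).rank = n) {c t : ℝ} (hct : c < t) :
    (∫ s in c..t, (max 0 (s - c)) • (NormedSpace.exp (s • -A) * B *
      (NormedSpace.exp (s • -A) * B)ᵀ)).PosDef := by
  set f : ℝ → Matrix (Fin n) (Fin n) ℝ := fun s => (max 0 (s - c)) • (NormedSpace.exp (s • -A) * B *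
      (NormedSpace.exp (s • -A) * B)ᵀ) with hfdef
  have hexp : Continuous fun s : ℝ => NormedSpace.exp (s • -A) :=
    continuous_iff_continuousAt.2 fun s =>
      (hasDerivAt_exp_smul_const (𝕂 := ℝ) (-A) s).continuousAt
  have hf : Continuous f := by
    rw [hfdef]; fun_prop
  have hps : ∀ s, (f s).PosSemidef := fun s => by
    have := (posSemidef_self_mul_conjTranspose (NormedSpace.exp (s • -A) * B)).smul
      (le_max_left 0 (s - c))
    rwa [conjTranspose_eq_transpose_of_trivial] at this
  have hG := posSemidef_integral hf hps hct.le
  refine .of_dotProduct_mulVec_pos hG.isHermitian fun x hx => ?_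
  refine lt_of_le_of_ne (hG.dotProduct_mulVec_nonneg x) fun h0 => hx ?_
  have hd := fun t => hasDerivAt_quad x (hasDerivAt_integral hf c t)
  have hm : Monotone fun u => x ⬝ᵥ (∫ s in c..u, f s) *ᵥ x :=
    monotone_of_hasDerivAt_nonneg hd fun t => by
      simpa using (hps t).dotProduct_mulVec_nonneg x
  refine eq_zero_of_exp hctrb x hct fun s hs => ?_
  have h2 : (fun u => x ⬝ᵥ (∫ s in c..u, f s) *ᵥ x) =ᶠ[nhds s] fun _ => 0 := by
    filter_upwards [Ioo_mem_nhds hs.1 hs.2] with u hu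
    refine le_antisymm ((hm hu.2.le).trans ?_) (le_trans ?_ (hm hu.1.le))
    · simpa using h0.symm.le
    · simp
  have h3 := (hd s).unique ((hasDerivAt_const s (0 : ℝ)).congr_of_eventuallyEq h2)
  have hpos : 0 < max 0 (s - c) := lt_max_of_lt_right (sub_pos.2 hs.1)
  rw [hfdef] at h3
  simp only [Matrix.smul_mulVec, dotProduct_smul, smul_eq_mul] at h3
  have h4 := (mul_eq_zero.1 h3).resolve_left hpos.ne'
  rw [← mulVec_mulVec, dotProduct_mulVec, mulVec_transpose] at h4
  exact dotProduct_self_eq_zero.1 h4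


/-! ### The covariance path -/

/-- A continuous gain `K` together with an explicit solution `S` of the covariance equation that joins
`Sig0` to `Sig1` through positive definite matrices. -/
theorem exists_path {n p : ℕ} {A : Matrix (Fin n) (Fin n) ℝ} {B : Matrix (Fin n) (Fin p) ℝ}
    (hctrb : (ctrbConstMat A B).rank = n)
    {Sig0 Sig1 : Matrix (Fin n) (Fin n) ℝ} (hSig0 : Sig0.PosDef) (hSig1 : Sig1.PosDef)
    {M : ℝ → Matrix (Fin n) (Fin n) ℝ} {ν : ℝ → ℝ} (hM : Continuous M) (hν : Continuous ν)
    (hMpsd : ∀ t, (M t).PosSemidef) :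
    ∃ (K : ℝ → Matrix (Fin p) (Fin n) ℝ) (S : ℝ → Matrix (Fin n) (Fin n) ℝ),
      ContinuousOn K (Icc 0 1) ∧ S 0 = Sig0 ∧ S 1 = Sig1 ∧ (∀ t ∈ Icc (0 : ℝ) 1, (S t).PosDef) ∧
      ∀ t ∈ Icc (0 : ℝ) 1, HasDerivWithinAt S
        ((A + B * K t) * S t + S t * (A + B * K t)ᵀ + M t + (2 * ν t) • S t) (Icc 0 1) t := by
  have symm_of : ∀ {N : Matrix (Fin n) (Fin n) ℝ}, N.IsHermitian → Nᵀ = N := fun {N} h => by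
    rwa [IsHermitian, conjTranspose_eq_transpose_of_trivial] at h
  set X : ℝ → Matrix (Fin n) (Fin n) ℝ := fun t => NormedSpace.exp (t • A) with hX
  set Y : ℝ → Matrix (Fin n) (Fin n) ℝ := fun t => NormedSpace.exp (t • -A) with hY
  have hXY : ∀ t, X t * Y t = 1 := fun t => by
    have hu : IsUnit (X t).det := (Matrix.isUnit_iff_isUnit_det _).1 (Matrix.isUnit_exp _)
    simp only [hY, smul_neg, Matrix.exp_neg]
    exact mul_nonsing_inv _ hu
  have hXd : ∀ t, HasDerivAt X (A * X t) t := fun t => hasDerivAt_exp_smul_const' (𝕂 := ℝ) A t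
  have hYc : Continuous Y := continuous_iff_continuousAt.2 fun t =>
    (hasDerivAt_exp_smul_const (𝕂 := ℝ) (-A) t).continuousAt
  set h : ℝ → ℝ := fun t => ∫ s in (0 : ℝ)..t, ν s with hh
  have hhd : ∀ t, HasDerivAt h (ν t) t := fun t => (hν.integral_hasStrictDerivAt 0 t).hasDerivAt
  have hhc : Continuous h := continuous_iff_continuousAt.2 fun t => (hhd t).continuousAt
  set F : ℝ → Matrix (Fin n) (Fin n) ℝ := fun t => Real.exp (h t) • X t with hF
  set E : ℝ → Matrix (Fin n) (Fin n) ℝ := fun t => Real.exp (-h t) • Y t with hE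
  have hFE : ∀ t, F t * E t = 1 := fun t => by
    simp [hF, hE, hXY, smul_smul, ← Real.exp_add]
  have hFd : ∀ t, HasDerivAt F (A * F t + ν t • F t) t := fun t => by
    refine ((hhd t).exp.smul (hXd t)).congr_deriv ?_
    simp only [hF, Matrix.mul_smul, smul_smul, mul_comm]
  have hFc : Continuous F := continuous_iff_continuousAt.2 fun t => (hFd t).continuousAt
  have hEc : Continuous E := by rw [hE]; fun_prop
  have hF0 : F 0 = 1 := by simp [hF, hh, hX]
  -- `Q` is the noise in the coordinates `E t * S t * (E t)ᵀ`, in which `A` and `ν` disappear from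
  -- the equation.
  set Q : ℝ → Matrix (Fin n) (Fin n) ℝ := fun t => E t * M t * (E t)ᵀ with hQ
  have hQc : Continuous Q := by rw [hQ]; fun_prop
  have hQp : ∀ t, (Q t).PosSemidef := fun t => by
    simpa only [conjTranspose_eq_transpose_of_trivial] using
      (hMpsd t).mul_mul_conjTranspose_same (E t)
  have hFQ : ∀ t, F t * Q t * (F t)ᵀ = M t := fun t => by
    have : F t * Q t * (F t)ᵀ = (F t * E t) * M t * (F t * E t)ᵀ := by
      simp only [hQ, transpose_mul, Matrix.mul_assoc]
    rw [this, hFE]; simp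
  set T : Matrix (Fin n) (Fin n) ℝ := E 1 * Sig1 * (E 1)ᵀ with hT
  have hFT : F 1 * T * (F 1)ᵀ = Sig1 := by
    have : F 1 * T * (F 1)ᵀ = (F 1 * E 1) * Sig1 * (F 1 * E 1)ᵀ := by
      simp only [hT, transpose_mul, Matrix.mul_assoc]
    rw [this, hFE]; simp
  have hTp : T.PosDef := by
    have hu : IsUnit (E 1) := IsUnit.of_mul_eq_one (F 1) (mul_eq_one_comm.1 (hFE 1))
    simpa only [conjTranspose_eq_transpose_of_trivial] using
      hSig1.mul_mul_conjTranspose_same (Matrix.vecMul_injective_of_isUnit hu)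
  -- The switching time `c` is so close to `1` that the noise received on `[c, 1]` does not exhaust
  -- the target covariance `T`.
  obtain ⟨c, hc, hR1⟩ : ∃ c ∈ Ioo (0 : ℝ) 1, (T - ∫ s in c..1, Q s).PosDef := by
    have hcont : Continuous fun c : ℝ => T + ∫ s in (1 : ℝ)..c, Q s :=
      continuous_const.add (continuous_iff_continuousAt.2 fun t =>
        (hasDerivAt_integral hQc 1 t).continuousAt)
    have hev := eventually_posDef (c := 1) hcont (fun t => by
      rw [transpose_add, symm_of hTp.isHermitian,
        transpose_integral hQc fun t => symm_of (hQp t).isHermitian]) (by simpa using hTp)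
    obtain ⟨c, h1, h2⟩ := ((hev.filter_mono nhdsWithin_le_nhds).and
      (Ioo_mem_nhdsLT (zero_lt_one (α := ℝ)))).exists
    refine ⟨c, h2, ?_⟩
    rwa [intervalIntegral.integral_symm, ← sub_eq_add_neg] at h1
  -- A weight vanishing up to time `c` keeps the control continuous at the switching time.
  set w : ℝ → ℝ := fun s => max 0 (s - c) with hw
  set f : ℝ → Matrix (Fin n) (Fin n) ℝ := fun s => w s • (Y s * B * (Y s * B)ᵀ) with hf
  have hfc : Continuous f := by rw [hf, hw]; fun_prop
  have hfs : ∀ t, (f t)ᵀ = f t := fun t => by simp [hf, transpose_mul, Matrix.mul_assoc]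
  set G : ℝ → Matrix (Fin n) (Fin n) ℝ := fun t => ∫ s in c..t, f s with hG
  have hGp : ∀ t, c < t → (G t).PosDef := fun t ht => gram_posDef hctrb ht
  have hG0 : ∀ t, t ≤ c → G t = 0 := fun t ht => by
    have : ∫ s in c..t, f s = ∫ s in c..t, (0 : Matrix (Fin n) (Fin n) ℝ) := by
      refine intervalIntegral.integral_congr fun s hs => ?_
      rw [uIcc_of_ge ht] at hs
      simp [hf, hw, max_eq_left (sub_nonpos.2 hs.2)]
    simp only [hG, this, intervalIntegral.integral_zero]
  have hG1u : IsUnit (G 1) := (hGp 1 hc.2).isUnit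
  set J : Matrix (Fin n) (Fin n) ℝ := (G 1)⁻¹ with hJ
  have hJs : Jᵀ = J := symm_of (hGp 1 hc.2).inv.isHermitian
  have hGJ : G 1 * J = 1 := mul_nonsing_inv _ ((Matrix.isUnit_iff_isUnit_det _).1 hG1u)
  set P : ℝ → Matrix (Fin n) (Fin n) ℝ := fun t => G t * J with hP
  have hPd : ∀ t, HasDerivAt P (f t * J) t := fun t => (hasDerivAt_integral hfc c t).mul_const J
  have hPu : ∀ t, c < t → IsUnit (P t) := fun t ht =>
    (hGp t ht).isUnit.mul (hGp 1 hc.2).inv.isUnit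
  have hP0 : ∀ t, t ≤ c → P t = 0 := fun t ht => by simp [hP, hG0 t ht]
  have hP1 : P 1 = 1 := hGJ
  set R0 : Matrix (Fin n) (Fin n) ℝ := Sig0 + ∫ s in (0 : ℝ)..c, Q s with hR0def
  set R1 : Matrix (Fin n) (Fin n) ℝ := T - ∫ s in c..1, Q s with hR1def
  have hR0 : R0.PosDef := hSig0.add_posSemidef (posSemidef_integral hQc hQp hc.1.le)
  have hR0s := symm_of hR0.isHermitian
  have hR1s := symm_of hR1.isHermitian
  -- `Z` is the covariance of `(1 - P t) x + P t y + (noise since c)` for independent `x`, `y` with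
  -- covariances `R0`, `R1`. Since `P` vanishes up to `c` and is invertible afterwards, `Z` is positive
  -- definite throughout.
  set Z : ℝ → Matrix (Fin n) (Fin n) ℝ := fun t =>
    (1 - P t) * R0 * (1 - P t)ᵀ + P t * R1 * (P t)ᵀ + ∫ s in c..t, Q s with hZ
  have hZearly : ∀ t, t ≤ c → Z t = Sig0 + ∫ s in (0 : ℝ)..t, Q s := fun t ht => by
    simp only [hZ, hP0 t ht, hR0def]
    simp only [sub_zero, transpose_one, Matrix.mul_one, Matrix.one_mul, Matrix.zero_mul, add_zero]
    rw [add_assoc, intervalIntegral.integral_add_adjacent_intervals] <;>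
      exact hQc.intervalIntegrable _ _
  have hZp : ∀ t ∈ Icc (0 : ℝ) 1, (Z t).PosDef := fun t ht => by
    rcases le_or_gt t c with htc | htc
    · rw [hZearly t htc]
      exact hSig0.add_posSemidef (posSemidef_integral hQc hQp ht.1)
    · refine Matrix.PosDef.add_posSemidef ?_ (posSemidef_integral hQc hQp htc.le)
      refine Matrix.PosDef.posSemidef_add ?_ ?_
      · simpa only [conjTranspose_eq_transpose_of_trivial] using
          hR0.posSemidef.mul_mul_conjTranspose_same (1 - P t)
      · simpa only [conjTranspose_eq_transpose_of_trivial] using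
          hR1.mul_mul_conjTranspose_same (Matrix.vecMul_injective_of_isUnit (hPu t htc))
  set V : ℝ → Matrix (Fin n) (Fin n) ℝ := fun t =>
    J * (R1 * (P t)ᵀ - R0 * (1 - P t)ᵀ) with hV
  have hZd : ∀ t, HasDerivAt Z (f t * V t + (f t * V t)ᵀ + Q t) t := fun t => by
    have h1 : HasDerivAt (fun t => 1 - P t) (-(f t * J)) t := (hPd t).const_sub 1
    have h2 := ((h1.mul_const R0).mul (hasDerivAt_transpose h1)).add
      (((hPd t).mul_const R1).mul (hasDerivAt_transpose (hPd t)))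
    refine (h2.add (hasDerivAt_integral hQc c t)).congr_deriv ?_
    simp only [hV, transpose_mul, transpose_sub, transpose_neg, hfs, hJs, hR0s, hR1s,
      transpose_transpose, transpose_one]
    noncomm_ring
  set S : ℝ → Matrix (Fin n) (Fin n) ℝ := fun t => F t * Z t * (F t)ᵀ with hS
  have hSp : ∀ t ∈ Icc (0 : ℝ) 1, (S t).PosDef := fun t ht => by
    have hu : IsUnit (F t) := IsUnit.of_mul_eq_one (E t) (hFE t)
    simpa only [conjTranspose_eq_transpose_of_trivial] using
      (hZp t ht).mul_mul_conjTranspose_same (Matrix.vecMul_injective_of_isUnit hu)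
  have hZc : Continuous Z := continuous_iff_continuousAt.2 fun t => (hZd t).continuousAt
  have hPc : Continuous P := continuous_iff_continuousAt.2 fun t => (hPd t).continuousAt
  have hSc : Continuous S := by rw [hS]; fun_prop
  -- `U = K * S` is the control in which the equation is linear.
  set U : ℝ → Matrix (Fin p) (Fin n) ℝ := fun t =>
    (Real.exp (h t) * w t) • (Bᵀ * (Y t)ᵀ * V t * (F t)ᵀ) with hU
  have hUc : Continuous U := by rw [hU, hV, hw]; fun_prop
  have hBU : ∀ t, B * U t = F t * (f t * V t) * (F t)ᵀ := fun t => by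
    have : F t * (f t * V t) * (F t)ᵀ =
        (Real.exp (h t) * w t) • ((X t * Y t) * B * (Bᵀ * (Y t)ᵀ * V t * (F t)ᵀ)) := by
      simp only [hF, hf, transpose_mul, Matrix.mul_smul, Matrix.smul_mul, smul_smul,
        Matrix.mul_assoc, mul_comm (w t)]
    rw [this, hXY, Matrix.one_mul, hU, Matrix.mul_smul]
  have hKS : ∀ t ∈ Icc (0 : ℝ) 1, U t * (S t)⁻¹ * S t = U t := fun t ht =>
    nonsing_inv_mul_cancel_right _ _ ((Matrix.isUnit_iff_isUnit_det _).1 (hSp t ht).isUnit)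
  refine ⟨fun t => U t * (S t)⁻¹, S, ?_, ?_, ?_, hSp, fun t ht => ?_⟩
  · intro t ht
    have hinv : ContinuousAt (fun t => (S t)⁻¹) t := by
      refine ContinuousAt.comp (g := Inv.inv) (f := S) ?_ hSc.continuousAt
      refine continuousAt_matrix_inv _ ?_
      have hu := (Matrix.isUnit_iff_isUnit_det _).1 (hSp t ht).isUnit
      simpa using NormedRing.inverse_continuousAt hu.unit
    exact ((continuous_fst.matrix_mul continuous_snd).continuousAt.comp
      (hUc.continuousAt.prodMk hinv)).continuousWithinAt
  · simp [hS, hF0, hZearly 0 hc.1.le]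
  · simp only [hS, hZ, hP1, hR1def]
    simpa using hFT
  · have hd := ((hFd t).mul (hZd t)).mul (hasDerivAt_transpose (hFd t))
    refine (hd.congr_deriv ?_).hasDerivWithinAt
    have hSs := symm_of (hSp t ht).isHermitian
    have e1 : B * (U t * (S t)⁻¹) * S t = F t * (f t * V t) * (F t)ᵀ := by
      rw [Matrix.mul_assoc, hKS t ht, hBU]
    have e2 : S t * (B * (U t * (S t)⁻¹))ᵀ = (F t * (f t * V t) * (F t)ᵀ)ᵀ := by
      rw [← e1, transpose_mul _ (S t), hSs]
    symm
    rw [transpose_add, Matrix.add_mul, Matrix.mul_add, e1, e2, ← hFQ t]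
    simp only [hS, Pi.mul_apply, transpose_add, transpose_mul, transpose_smul, transpose_transpose,
      Matrix.add_mul, Matrix.mul_add, Matrix.smul_mul, Matrix.mul_smul, Matrix.mul_assoc, two_mul,
      add_smul]
    abel

/-! ### Uniqueness for the covariance equation -/

/-- Solutions of the covariance equation on `[0, 1]` are determined by their initial value; the
right-hand side is Lipschitz in the unknown, uniformly in time by compactness. -/
theorem lyapunov_unique {n : ℕ} {L : ℝ → Matrix (Fin n) (Fin n) ℝ}
    {M : ℝ → Matrix (Fin n) (Fin n) ℝ} {ν : ℝ → ℝ}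
    (hL : ContinuousOn L (Icc 0 1)) (hν : ContinuousOn ν (Icc 0 1))
    {S R : ℝ → Matrix (Fin n) (Fin n) ℝ}
    (hS : ∀ t ∈ Icc (0 : ℝ) 1, HasDerivWithinAt S
      (L t * S t + S t * (L t)ᵀ + M t + (2 * ν t) • S t) (Icc 0 1) t)
    (hR : ∀ t ∈ Icc (0 : ℝ) 1, HasDerivWithinAt R
      (L t * R t + R t * (L t)ᵀ + M t + (2 * ν t) • R t) (Icc 0 1) t)
    (h0 : S 0 = R 0) : EqOn S R (Icc 0 1) := by
  have hb : ContinuousOn (fun t => ‖L t‖ + ‖(L t)ᵀ‖ + ‖2 * ν t‖) (Icc 0 1) := by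
    have : ContinuousOn (fun t => (L t)ᵀ) (Icc 0 1) := by fun_prop
    fun_prop
  obtain ⟨C, hC⟩ := isCompact_Icc.exists_bound_of_continuousOn hb
  have hright : ∀ {W : ℝ → Matrix (Fin n) (Fin n) ℝ} {W' : Matrix (Fin n) (Fin n) ℝ} {t : ℝ},
      t ∈ Ico (0 : ℝ) 1 → HasDerivWithinAt W W' (Icc 0 1) t → HasDerivWithinAt W W' (Ici t) t :=
    fun {W W' t} ht hW => hW.mono_of_mem_nhdsWithin
      (Filter.mem_of_superset (Icc_mem_nhdsGE ht.2) (Icc_subset_Icc_left ht.1))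
  refine ODE_solution_unique_of_mem_Icc_right (K := C.toNNReal) (s := fun _ => univ)
    (v := fun t W => L t * W + W * (L t)ᵀ + M t + (2 * ν t) • W) (fun t ht => ?_)
    (fun t ht => (hS t ht).continuousWithinAt)
    (fun t ht => hright ht (hS t (Ico_subset_Icc_self ht))) (fun _ _ => trivial)
    (fun t ht => (hR t ht).continuousWithinAt)
    (fun t ht => hright ht (hR t (Ico_subset_Icc_self ht))) (fun _ _ => trivial) h0
  refine (LipschitzWith.of_dist_le_mul fun W W' => ?_).lipschitzOnWith
  rw [dist_eq_norm, dist_eq_norm]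
  have e : L t * W + W * (L t)ᵀ + M t + (2 * ν t) • W -
      (L t * W' + W' * (L t)ᵀ + M t + (2 * ν t) • W') =
      L t * (W - W') + (W - W') * (L t)ᵀ + (2 * ν t) • (W - W') := by
    rw [Matrix.mul_sub, Matrix.sub_mul, smul_sub]; abel
  rw [e]
  calc _ ≤ ‖L t‖ * ‖W - W'‖ + ‖W - W'‖ * ‖(L t)ᵀ‖ + ‖2 * ν t‖ * ‖W - W'‖ :=
        norm_add₃_le.trans (add_le_add_three (norm_mul_le _ _) (norm_mul_le _ _)
          (norm_smul_le _ _))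
    _ = (‖L t‖ + ‖(L t)ᵀ‖ + ‖2 * ν t‖) * ‖W - W'‖ := by ring
    _ ≤ C.toNNReal * ‖W - W'‖ := by
        gcongr
        exact (le_abs_self _).trans ((hC t (Ico_subset_Icc_self ht)).trans
          (Real.le_coe_toNNReal C))

theorem hasDerivWithinAt_of_entries {n : ℕ} {S : ℝ → Matrix (Fin n) (Fin n) ℝ}
    {S' : Matrix (Fin n) (Fin n) ℝ} {s : Set ℝ} {t : ℝ}
    (h : ∀ i j, HasDerivWithinAt (fun τ => S τ i j) (S' i j) s t) : HasDerivWithinAt S S' s t := by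
  have h1 : ∀ N : Matrix (Fin n) (Fin n) ℝ,
      N = ∑ i, ∑ j, N i j • Matrix.single i j (1 : ℝ) := fun N => by
    simpa [Matrix.smul_single] using Matrix.matrix_eq_sum_single N
  have h2 : HasDerivWithinAt (fun τ => ∑ i, ∑ j, S τ i j • Matrix.single i j (1 : ℝ))
      (∑ i, ∑ j, S' i j • Matrix.single i j (1 : ℝ)) s t :=
    HasDerivWithinAt.fun_sum fun i _ => HasDerivWithinAt.fun_sum fun j _ =>
      (h i j).smul_const _
  rw [← h1 S'] at h2
  exact h2.congr (fun τ _ => h1 _) (h1 _)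

end Steering

theorem stmt_17 {n p : ℕ} (hn : 1 ≤ n) (hp : 1 ≤ p)
    (A : Matrix (Fin n) (Fin n) ℝ) (B : Matrix (Fin n) (Fin p) ℝ)
    (hctrb : (ctrbConstMat A B).rank = n)
    (Sig0 Sig1 : Matrix (Fin n) (Fin n) ℝ) (hSig0 : Sig0.PosDef) (hSig1 : Sig1.PosDef)
    (M : ℝ → Matrix (Fin n) (Fin n) ℝ) (ν : ℝ → ℝ)
    (hM : ∀ i j, ContDiffOn ℝ (max (n - 2) 0 : ℕ) (fun t => M t i j) (Set.Icc 0 1))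
    (hν : ContDiffOn ℝ (max (n - 2) 0 : ℕ) ν (Set.Icc 0 1))
    (hMpsd : ∀ t ∈ Set.Icc (0:ℝ) 1, (M t).PosSemidef)
    (hνpos : ∀ t ∈ Set.Icc (0:ℝ) 1, 0 ≤ ν t) :
    ∃ K : ℝ → Matrix (Fin p) (Fin n) ℝ,
      ContinuousOn K (Set.Icc 0 1) ∧
      ∀ S : ℝ → Matrix (Fin n) (Fin n) ℝ, S 0 = Sig0 →
        (∀ t ∈ Set.Icc (0:ℝ) 1, ∀ (i j : Fin n),
          HasDerivWithinAt (fun τ : ℝ => S τ i j)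
            (((A + B * K t) * S t + S t * (A + B * K t)ᵀ + M t + (2 * ν t) • S t) i j)
            (Set.Icc (0:ℝ) 1) t) →
        (∀ t ∈ Set.Icc (0:ℝ) 1, (S t).PosDef) ∧ S 1 = Sig1 := by
  have hMc : ContinuousOn M (Set.Icc 0 1) :=
    continuousOn_pi.2 fun i => continuousOn_pi.2 fun j => (hM i j).continuousOn
  have h01 : (0 : ℝ) ≤ 1 := zero_le_one
  -- `M` and `ν` are extended by their endpoint values to continuous functions on the whole line.
  have hME : Continuous (Set.IccExtend h01 ((Set.Icc (0 : ℝ) 1).domRestrict M)) :=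
    hMc.domRestrict.Icc_extend'
  have hνE : Continuous (Set.IccExtend h01 ((Set.Icc (0 : ℝ) 1).domRestrict ν)) :=
    hν.continuousOn.domRestrict.Icc_extend'
  obtain ⟨K, R, hK, hR0, hR1, hRp, hRd⟩ := exists_path hctrb hSig0 hSig1 hME hνE
    fun t => hMpsd _ (Set.projIcc 0 1 h01 t).2
  refine ⟨K, hK, fun S hS0 hSd => ?_⟩
  have heq : Set.EqOn S R (Set.Icc 0 1) := by
    refine lyapunov_unique (L := fun t => A + B * K t) (M := M) (ν := ν) ?_ hν.continuousOn
      (fun t ht => hasDerivWithinAt_of_entries (hSd t ht)) (fun t ht => ?_) (hS0.trans hR0.symm)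
    · exact continuousOn_const.add ((continuous_const.matrix_mul continuous_id).comp_continuousOn hK)
    · have := hRd t ht
      rw [Set.IccExtend_of_mem h01 _ ht, Set.IccExtend_of_mem h01 _ ht] at this
      exact this
  refine ⟨fun t ht => ?_, ?_⟩
  · rw [heq ht]
    exact hRp t ht
  · rw [heq (Set.right_mem_Icc.2 h01), hR1]
end

section
/- Let A : [0,1] → ℝ^{n×n} be of class C^{n−1} and B : [0,1] → ℝ^{n×p} of class C^n, and assume the pair (A(t), B(t)) is uniformly controllable and index invariant on [0,1]. Let N, ν be of class C^{max(n−2,0)} on [0,1] with N(t) symmetric positive semidefinite and ν(t) ≥ 0. Then for any symmetric positive definite Σ₀ and Σ₁ there exists a bounded, piecewise continuous K : [0,1] → ℝ^{p×n} such that the solution of Σ'(t) = (A(t) + B(t)K(t))Σ + Σ(A(t) + B(t)K(t))ᵀ + N(t) + 2ν(t)Σ with Σ(0) = Σ₀ satisfies Σ(t) ≻ 0 (symmetric positive definite) for all t ∈ [0,1] and Σ(1) = Σ₁. -/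
/-!
Put `F = A + ν I`, let `Y` solve `Y' = F Y`, `Y(0) = I`, and let `Z = Y⁻¹`. In the coordinates
`Σ = Y S Yᵀ`, with `U` in place of `K Σ (Yᵀ)⁻¹`, the Lyapunov equation becomes the affine equation
`S' = M + C U + (C U)ᵀ` with `C = Z B` and `M = Z N Zᵀ ⪰ 0`. The control `U` is free, and `K` is
recovered from it once `S` is known to be positive definite.

Uniform controllability says that no nonzero covector annihilates `C` on an interval
(`vecMul_chain_eq_zero`), so the weighted Gramians `W(t) = ∫ₜ¹ ρ C Cᵀ` are positive definite for
`t < 1` (`posDef_gramian`). Then `G(t) = W(t) W(0)⁻¹` satisfies `G' = C J` for a continuous `J`,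
`G(0) = I`, `G(1) = 0`, and is invertible on `[0,1)`. For `M = 0` the sum
`G S₀ Gᵀ + (I - G) S₁ (I - G)ᵀ` therefore already steers `S₀` to `S₁` through positive definite
matrices.

The noise is handled by waiting. The weight `ρ` vanishes on `[0,c]`, with `c` so close to `1` that
the noise arriving at the end, `∫ (1 - χ) M`, is smaller than the target; here `χ` is a continuous
cutoff supported in `(-∞,c]`. The early noise `χ M` is added to `S₀` while `G = I` and removed
together with it; the late noise is left alone, and the target is lowered by its total
(`exists_cutoff`, `exists_steering`). The resulting `K` is continuous on `[0,1]`, so the exceptional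
set is empty.
-/

open Matrix

/-- The matrix `Θᵢ(t) = [Γ₀(t) Γ₁(t) ⋯ Γ_{i−1}(t)]`. -/
def thetaMat {n p : ℕ} (Γ : ℕ → ℝ → Matrix (Fin n) (Fin p) ℝ) (i : ℕ) (t : ℝ) :
    Matrix (Fin n) (Fin i × Fin p) ℝ :=
  Matrix.of fun a kj => Γ (kj.1 : ℕ) t a kj.2

open Set

/-! ### Entrywise calculus of matrix functions -/

/-- `X` has derivative `X'` at `t` relative to `[0,1]`, entry by entry. Working with entries avoids
choosing a norm on matrices and gives a product rule for rectangular factors. -/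
def MDeriv {a b : ℕ} (X : ℝ → Matrix (Fin a) (Fin b) ℝ) (X' : Matrix (Fin a) (Fin b) ℝ)
    (t : ℝ) : Prop :=
  ∀ i j, HasDerivWithinAt (fun τ => X τ i j) (X' i j) (Icc (0 : ℝ) 1) t

namespace MDeriv

variable {a b c : ℕ} {t : ℝ}

theorem const (X : Matrix (Fin a) (Fin b) ℝ) : MDeriv (fun _ => X) 0 t := fun _ _ =>
  hasDerivWithinAt_const _ _ _

theorem add {X Y : ℝ → Matrix (Fin a) (Fin b) ℝ} {X' Y' : Matrix (Fin a) (Fin b) ℝ}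
    (hX : MDeriv X X' t) (hY : MDeriv Y Y' t) : MDeriv (fun τ => X τ + Y τ) (X' + Y') t :=
  fun i j => (hX i j).add (hY i j)

theorem sub {X Y : ℝ → Matrix (Fin a) (Fin b) ℝ} {X' Y' : Matrix (Fin a) (Fin b) ℝ}
    (hX : MDeriv X X' t) (hY : MDeriv Y Y' t) : MDeriv (fun τ => X τ - Y τ) (X' - Y') t :=
  fun i j => (hX i j).sub (hY i j)

theorem transpose {X : ℝ → Matrix (Fin a) (Fin b) ℝ} {X' : Matrix (Fin a) (Fin b) ℝ}
    (hX : MDeriv X X' t) : MDeriv (fun τ => (X τ)ᵀ) X'ᵀ t :=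
  fun i j => hX j i

theorem mul {X : ℝ → Matrix (Fin a) (Fin b) ℝ} {Y : ℝ → Matrix (Fin b) (Fin c) ℝ}
    {X' : Matrix (Fin a) (Fin b) ℝ} {Y' : Matrix (Fin b) (Fin c) ℝ}
    (hX : MDeriv X X' t) (hY : MDeriv Y Y' t) :
    MDeriv (fun τ => X τ * Y τ) (X' * Y t + X t * Y') t := by
  intro i j
  simp only [Matrix.add_apply, Matrix.mul_apply, ← Finset.sum_add_distrib]
  exact HasDerivWithinAt.fun_sum fun k _ => (hX i k).mul (hY k j)

theorem continuousOn {X X' : ℝ → Matrix (Fin a) (Fin b) ℝ}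
    (h : ∀ t ∈ Icc (0 : ℝ) 1, MDeriv X (X' t) t) : ContinuousOn X (Icc (0 : ℝ) 1) :=
  continuousOn_pi.2 fun i => continuousOn_pi.2 fun j => fun t ht =>
    (h t ht i j).continuousWithinAt

theorem eq_of_zero {X : ℝ → Matrix (Fin a) (Fin b) ℝ}
    (h : ∀ t ∈ Icc (0 : ℝ) 1, MDeriv X 0 t) (ht : t ∈ Icc (0 : ℝ) 1) : X t = X 0 := by
  ext i j
  refine constant_of_has_deriv_right_zero (f := fun τ => X τ i j)
    (fun s hs => (h s hs i j).continuousWithinAt) (fun s hs => ?_) t ht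
  exact (h s ⟨hs.1, hs.2.le⟩ i j).mono_of_mem_nhdsWithin
    (Filter.mem_of_superset (Icc_mem_nhdsGE hs.2) (Icc_subset_Icc_left hs.1))

end MDeriv

/-! ### Linear differential equations on `[0,1]` -/

section ODE

variable {n : ℕ}

/-- Truncation of every coordinate to `[-R, R]`. -/
def clampVec (R : ℝ) (v : Fin n → ℝ) : Fin n → ℝ := fun i => max (-R) (min R (v i))

/-- Global existence for `y' = F y`. Truncating the right-hand side at height `R` makes the vector
field bounded, so Picard–Lindelöf applies on the whole of `[0,1]`; Grönwall's inequality shows that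
the truncation at `R = ‖x₀‖ exp M` is never active. -/
theorem exists_vec_solution (F : ℝ → Matrix (Fin n) (Fin n) ℝ) (hF : Continuous F)
    (x₀ : Fin n → ℝ) :
    ∃ y : ℝ → Fin n → ℝ, y 0 = x₀ ∧
      ∀ t ∈ Icc (0 : ℝ) 1, HasDerivWithinAt y (F t *ᵥ y t) (Icc 0 1) t := by
  obtain ⟨M, hM0, hM⟩ : ∃ M : ℝ, 0 ≤ M ∧ ∀ t ∈ Icc (0 : ℝ) 1, ∀ v : Fin n → ℝ,
      ‖F t *ᵥ v‖ ≤ M * ‖v‖ := by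
    have hc : Continuous fun t => ∑ i, ∑ j, |F t i j| := by fun_prop
    obtain ⟨M, hM⟩ := isCompact_Icc.exists_bound_of_continuousOn
      (s := Icc (0 : ℝ) 1) hc.continuousOn
    refine ⟨M, (norm_nonneg _).trans (hM 0 (by simp)), fun t ht v => ?_⟩
    have hMt := (le_abs_self _).trans (hM t ht)
    have hM0 : 0 ≤ M := (norm_nonneg _).trans (hM t ht)
    refine (pi_norm_le_iff_of_nonneg (by positivity)).2 fun i => ?_
    calc ‖(F t *ᵥ v) i‖ = |∑ j, F t i j * v j| := rfl
      _ ≤ ∑ j, |F t i j * v j| := Finset.abs_sum_le_sum_abs _ _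
      _ ≤ ∑ j, |F t i j| * ‖v‖ := Finset.sum_le_sum fun j _ => by
          rw [abs_mul]; gcongr; exact norm_le_pi_norm v j
      _ = (∑ j, |F t i j|) * ‖v‖ := by rw [Finset.sum_mul]
      _ ≤ M * ‖v‖ := by
          gcongr
          exact (Finset.single_le_sum (f := fun i => ∑ j, |F t i j|)
            (fun i _ => Finset.sum_nonneg fun j _ => abs_nonneg _) (Finset.mem_univ i)).trans hMt
  set R : ℝ := ‖x₀‖ * Real.exp M with hR
  have hR0 : 0 ≤ R := by positivity
  have hclR : ∀ v : Fin n → ℝ, ‖clampVec R v‖ ≤ R := fun v =>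
    (pi_norm_le_iff_of_nonneg hR0).2 fun i => by
      rw [Real.norm_eq_abs, abs_le]
      exact ⟨le_max_left _ _, max_le (by linarith) (min_le_left _ _)⟩
  have hcllip : ∀ v w : Fin n → ℝ, ‖clampVec R v - clampVec R w‖ ≤ ‖v - w‖ := fun v w =>
    (pi_norm_le_iff_of_nonneg (norm_nonneg _)).2 fun i => by
      refine le_trans ?_ (norm_le_pi_norm (v - w) i)
      simp only [clampVec, Pi.sub_apply, Real.norm_eq_abs]
      refine (abs_max_sub_max_le_max _ _ _ _).trans (max_le (by simp) ?_)
      exact (abs_min_sub_min_le_max _ _ _ _).trans (max_le (by simp) le_rfl)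
  have hcl0 : clampVec R (0 : Fin n → ℝ) = 0 := by
    ext i; simp [clampVec, hR0]
  have hclle : ∀ v : Fin n → ℝ, ‖clampVec R v‖ ≤ ‖v‖ := fun v => by
    simpa [hcl0] using hcllip v 0
  let a : NNReal := ⟨M * R, by positivity⟩
  have hPL : IsPicardLindelof (fun t v => F t *ᵥ clampVec R v) (tmin := 0) (tmax := 1)
      ⟨0, by simp⟩ x₀ a 0 a ⟨M, hM0⟩ := by
    refine ⟨fun t ht => LipschitzOnWith.of_dist_le_mul fun v _ w _ => ?_, fun v _ => ?_,
      fun t ht v _ => ?_, by simp⟩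
    · rw [dist_eq_norm, dist_eq_norm, ← Matrix.mulVec_sub]
      exact (hM t ht _).trans (mul_le_mul_of_nonneg_left (hcllip v w) hM0)
    · exact (hF.matrix_mulVec continuous_const).continuousOn
    · exact (hM t ht _).trans (mul_le_mul_of_nonneg_left (hclR v) hM0)
  obtain ⟨y, hy0, hy⟩ := hPL.exists_eq_forall_mem_Icc_hasDerivWithinAt₀
  refine ⟨y, hy0, fun t ht => ?_⟩
  have hbound := norm_le_gronwallBound_of_norm_deriv_right_le (f := y) (δ := ‖x₀‖) (K := M)
    (ε := 0) (a := 0) (b := 1) (fun s hs => (hy s hs).continuousWithinAt)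
    (fun s hs => (hy s ⟨hs.1, hs.2.le⟩).mono_of_mem_nhdsWithin
      (Filter.mem_of_superset (Icc_mem_nhdsGE hs.2) (Icc_subset_Icc_left hs.1)))
    (by rw [← hy0])
    (fun s hs => by
      rw [add_zero]
      exact (hM s ⟨hs.1, hs.2.le⟩ _).trans (mul_le_mul_of_nonneg_left (hclle _) hM0)) t ht
  rw [gronwallBound_ε0] at hbound
  have hle : ‖y t‖ ≤ R := hbound.trans (by
    rw [hR]; gcongr; nlinarith [ht.1, ht.2])
  have hcl : clampVec R (y t) = y t := by
    ext i
    have := abs_le.1 ((norm_le_pi_norm (y t) i).trans hle)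
    simp [clampVec, this.1, this.2]
  have := hy t ht
  simpa only [hcl] using this

theorem exists_fundamental (F : ℝ → Matrix (Fin n) (Fin n) ℝ) (hF : Continuous F) :
    ∃ Y : ℝ → Matrix (Fin n) (Fin n) ℝ, Y 0 = 1 ∧
      ∀ t ∈ Icc (0 : ℝ) 1, MDeriv Y (F t * Y t) t := by
  choose y hy0 hy using fun j => exists_vec_solution F hF (fun i => (1 : Matrix (Fin n) (Fin n) ℝ) i j)
  refine ⟨fun t => Matrix.of fun i j => y j t i, ?_, fun t ht i j => ?_⟩
  · ext i j; simp [hy0]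
  · exact hasDerivWithinAt_pi.1 (hy j t ht) i

/-- A fundamental solution `Y` of `Y' = F Y` together with its inverse `Z`, obtained as the
transposed fundamental solution of the adjoint equation. -/
theorem exists_fundamental_pair (F : ℝ → Matrix (Fin n) (Fin n) ℝ) (hF : Continuous F) :
    ∃ Y Z : ℝ → Matrix (Fin n) (Fin n) ℝ, Y 0 = 1 ∧ Z 0 = 1 ∧
      (∀ t ∈ Icc (0 : ℝ) 1, MDeriv Y (F t * Y t) t) ∧
      (∀ t ∈ Icc (0 : ℝ) 1, MDeriv Z (-(Z t * F t)) t) ∧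
      (∀ t ∈ Icc (0 : ℝ) 1, Z t * Y t = 1) ∧ ∀ t ∈ Icc (0 : ℝ) 1, Y t * Z t = 1 := by
  obtain ⟨Y, hY0, hY⟩ := exists_fundamental F hF
  obtain ⟨X, hX0, hX⟩ := exists_fundamental (fun t => -(F t)ᵀ) (by fun_prop)
  have hZ : ∀ t ∈ Icc (0 : ℝ) 1, MDeriv (fun t => (X t)ᵀ) (-((X t)ᵀ * F t)) t := fun t ht => by
    simpa using (hX t ht).transpose
  have hZY : ∀ t ∈ Icc (0 : ℝ) 1, (X t)ᵀ * Y t = 1 := fun t ht => by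
    have := MDeriv.eq_of_zero (X := fun t => (X t)ᵀ * Y t)
      (fun s hs => by simpa [Matrix.mul_assoc] using (hZ s hs).mul (hY s hs)) ht
    simpa [hX0, hY0] using this
  exact ⟨Y, fun t => (X t)ᵀ, hY0, by simp [hX0], hY, hZ, hZY,
    fun t ht => mul_eq_one_comm.1 (hZY t ht)⟩

end ODE
/-! ### Positive definiteness, primitives and the Gramian -/

section Posdef

variable {n p : ℕ}

/-- A positive definite matrix stays positive definite under small symmetric perturbations. -/
theorem PosDef.exists_sub_small {S : Matrix (Fin n) (Fin n) ℝ} (hS : S.PosDef) :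
    ∃ η > 0, ∀ X : Matrix (Fin n) (Fin n) ℝ, X.IsHermitian → (∀ i j, |X i j| ≤ η) →
      (S - X).PosDef := by
  obtain ⟨l, hl, hlS⟩ : ∃ l > 0, ∀ w : Fin n → ℝ, l * ‖w‖ ^ 2 ≤ w ⬝ᵥ (S *ᵥ w) := by
    rcases (Metric.sphere (0 : Fin n → ℝ) 1).eq_empty_or_nonempty with he | hne
    · refine ⟨1, one_pos, fun w => ?_⟩
      have hw : w = 0 := by
        by_contra hw
        have : ‖w‖⁻¹ • w ∈ Metric.sphere (0 : Fin n → ℝ) 1 := by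
          simp [norm_smul, hw]
        simp [he] at this
      simp [hw]
    · obtain ⟨v, hv, hmin⟩ := (isCompact_sphere (0 : Fin n → ℝ) 1).exists_isMinOn hne
        (f := fun w => w ⬝ᵥ (S *ᵥ w)) (by fun_prop)
      have hv0 : v ≠ 0 := by rintro rfl; simp at hv
      refine ⟨v ⬝ᵥ (S *ᵥ v), by simpa using hS.dotProduct_mulVec_pos hv0, fun w => ?_⟩
      rcases eq_or_ne w 0 with rfl | hw
      · simp
      have h0 : 0 < ‖w‖ := norm_pos_iff.2 hw
      have hmem : ‖w‖⁻¹ • w ∈ Metric.sphere (0 : Fin n → ℝ) 1 := by simp [norm_smul, hw]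
      have := hmin hmem
      simp only [mem_ofPred_eq, Matrix.mulVec_smul, smul_dotProduct, dotProduct_smul,
        smul_eq_mul] at this
      calc v ⬝ᵥ (S *ᵥ v) * ‖w‖ ^ 2 ≤ (‖w‖⁻¹ * (‖w‖⁻¹ * (w ⬝ᵥ (S *ᵥ w)))) * ‖w‖ ^ 2 := by gcongr
        _ = w ⬝ᵥ (S *ᵥ w) := by field_simp
  refine ⟨l / (n ^ 2 + 1), by positivity, fun X hX hXs => ?_⟩
  refine PosDef.of_dotProduct_mulVec_pos (hS.isHermitian.sub hX) fun w hw => ?_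
  have h0 : 0 < ‖w‖ := norm_pos_iff.2 hw
  have hXw : w ⬝ᵥ (X *ᵥ w) ≤ n ^ 2 * (l / (n ^ 2 + 1)) * ‖w‖ ^ 2 := by
    calc w ⬝ᵥ (X *ᵥ w) = ∑ i, ∑ j, w i * (X i j * w j) := by
          simp [dotProduct, mulVec, Finset.mul_sum]
      _ ≤ ∑ i : Fin n, ∑ j : Fin n, ‖w‖ * (l / (n ^ 2 + 1) * ‖w‖) :=
          Finset.sum_le_sum fun i _ => Finset.sum_le_sum fun j _ => by
            refine (le_abs_self _).trans ?_
            rw [abs_mul, abs_mul]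
            gcongr
            · exact norm_le_pi_norm w i
            · exact hXs i j
            · exact norm_le_pi_norm w j
      _ = _ := by simp; ring
  have hlt : n ^ 2 * (l / (n ^ 2 + 1)) * ‖w‖ ^ 2 < l * ‖w‖ ^ 2 := by
    have : (n : ℝ) ^ 2 * (l / (n ^ 2 + 1)) < l := by
      rw [← mul_div_assoc, div_lt_iff₀ (by positivity)]; nlinarith
    gcongr
  rw [star_trivial, Matrix.sub_mulVec, dotProduct_sub]
  linarith [hlS w]

theorem continuousOn_matrix_mul {a b c : ℕ} {X : ℝ → Matrix (Fin a) (Fin b) ℝ}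
    {Y : ℝ → Matrix (Fin b) (Fin c) ℝ} {s : Set ℝ} (hX : ContinuousOn X s)
    (hY : ContinuousOn Y s) : ContinuousOn (fun t => X t * Y t) s := by
  rw [continuousOn_iff_continuous_domRestrict] at *
  exact hX.matrix_mul hY

theorem continuousOn_matrix_inv {X : ℝ → Matrix (Fin n) (Fin n) ℝ} {s : Set ℝ} (hX : ContinuousOn X s)
    (h0 : ∀ t ∈ s, (X t).det ≠ 0) : ContinuousOn (fun t => (X t)⁻¹) s := by
  rw [continuousOn_iff_continuous_domRestrict] at *
  simp only [Set.domRestrict_def, Matrix.inv_def, Ring.inverse_eq_inv'] at *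
  exact (hX.matrix_det.inv₀ fun t => h0 t t.2).smul hX.matrix_adjugate

/-- The entrywise integral of `X` from `s` to `t`. -/
noncomputable def prim {a b : ℕ} (X : ℝ → Matrix (Fin a) (Fin b) ℝ) (s t : ℝ) :
    Matrix (Fin a) (Fin b) ℝ :=
  Matrix.of fun i j => ∫ τ in s..t, X τ i j

theorem prim_self {a b : ℕ} (X : ℝ → Matrix (Fin a) (Fin b) ℝ) (s : ℝ) : prim X s s = 0 := by
  ext i j; simp [prim]

theorem mderiv_prim {a b : ℕ} {X : ℝ → Matrix (Fin a) (Fin b) ℝ} (hX : Continuous X) (s t : ℝ) :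
    MDeriv (prim X s) (X t) t := fun i j =>
  ((hX.matrix_elem i j).integral_hasStrictDerivAt s t).hasDerivAt.hasDerivWithinAt

theorem prim_sub_prim {a b : ℕ} {X : ℝ → Matrix (Fin a) (Fin b) ℝ} (hX : Continuous X)
    (r s t : ℝ) : prim X r t - prim X r s = prim X s t := by
  ext i j
  exact intervalIntegral.integral_interval_sub_left
    ((hX.matrix_elem i j).intervalIntegrable _ _) ((hX.matrix_elem i j).intervalIntegrable _ _)

theorem continuous_prim {a b : ℕ} {X : ℝ → Matrix (Fin a) (Fin b) ℝ} (hX : Continuous X) (s : ℝ) :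
    Continuous (prim X s) :=
  continuous_pi fun i => continuous_pi fun j =>
    intervalIntegral.continuous_primitive
      (fun _ _ => (hX.matrix_elem i j).intervalIntegrable _ _) s

theorem dotProduct_prim {X : ℝ → Matrix (Fin n) (Fin n) ℝ} (hX : Continuous X) (s t : ℝ)
    (w : Fin n → ℝ) : w ⬝ᵥ (prim X s t *ᵥ w) = ∫ τ in s..t, w ⬝ᵥ (X τ *ᵥ w) := by
  have hint : ∀ i j, IntervalIntegrable (fun τ => w i * (X τ i j * w j)) MeasureTheory.volume s t :=
    fun i j => ((hX.matrix_elem i j).mul continuous_const |>.const_mul _).intervalIntegrable _ _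
  simp only [dotProduct, mulVec, Finset.mul_sum, prim, Matrix.of_apply]
  rw [intervalIntegral.integral_finsetSum fun i _ =>
    Continuous.intervalIntegrable (by fun_prop) _ _]
  refine Finset.sum_congr rfl fun i _ => ?_
  rw [intervalIntegral.integral_finsetSum fun j _ => hint i j]
  refine Finset.sum_congr rfl fun j _ => ?_
  rw [intervalIntegral.integral_const_mul, intervalIntegral.integral_mul_const]

theorem isHermitian_prim {X : ℝ → Matrix (Fin n) (Fin n) ℝ} (hX : ∀ t, (X t).IsHermitian)
    (s t : ℝ) : (prim X s t).IsHermitian := by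
  ext i j
  simp only [prim, conjTranspose_apply, of_apply, star_trivial]
  congr 1; ext τ
  simpa using (hX τ).apply i j

theorem posSemidef_prim {X : ℝ → Matrix (Fin n) (Fin n) ℝ} (hX : Continuous X)
    (hpsd : ∀ t, (X t).PosSemidef) {s t : ℝ} (hst : s ≤ t) : (prim X s t).PosSemidef :=
  PosSemidef.of_dotProduct_mulVec_nonneg (isHermitian_prim (fun t => (hpsd t).isHermitian) s t)
    fun w => by
      rw [star_trivial, dotProduct_prim hX]
      exact intervalIntegral.integral_nonneg hst fun τ _ => by
        simpa using (hpsd τ).dotProduct_mulVec_nonneg w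

/-- The Gramian `∫ₜ¹ ρ C Cᵀ` with weight `ρ(τ) = max 0 (τ - c)` is positive definite for every
`t < 1`, because no nonzero `w` is orthogonal to the columns of `C` throughout an interval ending
at `1`. -/
theorem posDef_gramian {C : ℝ → Matrix (Fin n) (Fin p) ℝ} (hC : Continuous C)
    (hnd : ∀ c, 0 ≤ c → c < 1 → ∀ w, (∀ t ∈ Ioo c 1, w ᵥ* C t = 0) → w = 0)
    {c : ℝ} (hc0 : 0 ≤ c) (hc1 : c < 1) {t : ℝ} (ht : t < 1) :
    (prim (fun τ => max 0 (τ - c) • (C τ * (C τ)ᵀ)) t 1).PosDef := by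
  have hcont : Continuous fun τ => max 0 (τ - c) • (C τ * (C τ)ᵀ) := by fun_prop
  have hq : ∀ (w : Fin n → ℝ) τ, w ⬝ᵥ ((max 0 (τ - c) • (C τ * (C τ)ᵀ)) *ᵥ w) =
      max 0 (τ - c) * ((w ᵥ* C τ) ⬝ᵥ (w ᵥ* C τ)) := fun w τ => by
    rw [Matrix.smul_mulVec, dotProduct_smul, smul_eq_mul, ← Matrix.mulVec_mulVec,
      dotProduct_mulVec, Matrix.mulVec_transpose]
  have hsq : ∀ v : Fin p → ℝ, 0 ≤ v ⬝ᵥ v := fun v =>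
    Finset.sum_nonneg fun i _ => mul_self_nonneg _
  refine PosDef.of_dotProduct_mulVec_pos (isHermitian_prim (fun τ => ?_) t 1) fun w hw => ?_
  · simp [IsHermitian, conjTranspose_eq_transpose_of_trivial]
  rw [star_trivial, dotProduct_prim hcont]
  simp only [hq]
  refine intervalIntegral.integral_pos ht (by fun_prop)
    (fun τ _ => mul_nonneg (le_max_left _ _) (hsq _)) ?_
  by_contra! hno
  refine hw (hnd (max t c) (le_max_of_le_right hc0) (max_lt ht hc1) w fun τ hτ => ?_)
  have h1 : t < τ := (le_max_left _ _).trans_lt hτ.1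
  have h2 : c < τ := (le_max_right _ _).trans_lt hτ.1
  have h3 := hno τ ⟨h1.le, hτ.2.le⟩
  have h4 : 0 < max 0 (τ - c) := lt_max_of_lt_right (by linarith)
  exact dotProduct_self_eq_zero.1 (le_antisymm (nonpos_of_mul_nonpos_right h3 h4) (hsq _))

/-- A cutoff `χ` vanishing on `[c, ∞)` for some `c < 1`, yet equal to `1` on so much of `[0,1]` that
the noise `(1 - χ) M` accumulates to less than the target `S`. -/
theorem exists_cutoff {M : ℝ → Matrix (Fin n) (Fin n) ℝ} (hM : Continuous M)
    (hpsd : ∀ t, (M t).PosSemidef) {S : Matrix (Fin n) (Fin n) ℝ} (hS : S.PosDef) :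
    ∃ (c : ℝ) (χ : ℝ → ℝ), 0 ≤ c ∧ c < 1 ∧ Continuous χ ∧ (∀ t, 0 ≤ χ t) ∧ (∀ t, χ t ≤ 1) ∧
      (∀ t, c ≤ t → χ t = 0) ∧ (S - prim (fun t => (1 - χ t) • M t) 0 1).PosDef := by
  obtain ⟨η, hη, hsmall⟩ := PosDef.exists_sub_small hS
  obtain ⟨m, hm⟩ := isCompact_Icc.exists_bound_of_continuousOn (s := Icc (0 : ℝ) 1)
    (f := fun t => ∑ i, ∑ j, |M t i j|) (by fun_prop)
  have hm0 : 0 ≤ m := (norm_nonneg _).trans (hm 0 (by simp))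
  have hmij : ∀ t ∈ Icc (0 : ℝ) 1, ∀ i j, |M t i j| ≤ m := fun t ht i j =>
    calc |M t i j| ≤ ∑ j, |M t i j| :=
          Finset.single_le_sum (f := fun j => |M t i j|) (fun _ _ => abs_nonneg _)
            (Finset.mem_univ j)
      _ ≤ ∑ i, ∑ j, |M t i j| :=
          Finset.single_le_sum (f := fun i => ∑ j, |M t i j|)
            (fun i _ => Finset.sum_nonneg fun j _ => abs_nonneg _) (Finset.mem_univ i)
      _ ≤ m := (le_abs_self _).trans (hm t ht)
  obtain ⟨e, he0, he1, heη⟩ : ∃ e : ℝ, 0 < e ∧ 2 * e ≤ 1 ∧ m * (2 * e) ≤ η := by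
    refine ⟨min (1 / 2) (η / (2 * (m + 1))), by positivity, ?_, ?_⟩
    · linarith [min_le_left (1 / 2) (η / (2 * (m + 1)))]
    · calc m * (2 * min (1 / 2) (η / (2 * (m + 1)))) ≤ m * (2 * (η / (2 * (m + 1)))) := by
            gcongr; exact min_le_right _ _
        _ ≤ η := by
            rw [show m * (2 * (η / (2 * (m + 1)))) = m * η / (m + 1) by field_simp,
              div_le_iff₀ (by positivity)]
            nlinarith
  -- `χ` is `1` up to `1 - 2e`, decreases linearly, and is `0` from `c = 1 - e` on
  let χ : ℝ → ℝ := fun t => max 0 (min 1 ((1 - e - t) / e))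
  have hχc : Continuous χ := by fun_prop
  have hχ0 : ∀ t, 0 ≤ χ t := fun t => le_max_left _ _
  have hχ1 : ∀ t, χ t ≤ 1 := fun t => max_le zero_le_one (min_le_left _ _)
  refine ⟨1 - e, χ, by linarith, by linarith, hχc, hχ0, hχ1, fun t ht => ?_, ?_⟩
  · exact max_eq_left ((min_le_right _ _).trans (div_nonpos_of_nonpos_of_nonneg (by linarith) he0.le))
  have hXc : Continuous fun t => (1 - χ t) • M t := by fun_prop
  refine hsmall _ (isHermitian_prim (fun t => ?_) 0 1) fun i j => ?_
  · exact ((hpsd t).smul (sub_nonneg.2 (hχ1 t))).isHermitian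
  have hint : ∀ a b, IntervalIntegrable (fun t => ((1 - χ t) • M t) i j) MeasureTheory.volume a b :=
    fun a b => (hXc.matrix_elem i j).intervalIntegrable a b
  simp only [prim, of_apply]
  rw [← intervalIntegral.integral_add_adjacent_intervals (hint 0 (1 - 2 * e)) (hint _ 1)]
  have hzero : ∫ t in (0 : ℝ)..(1 - 2 * e), ((1 - χ t) • M t) i j = 0 := by
    rw [intervalIntegral.integral_congr (g := fun _ => (0 : ℝ)), intervalIntegral.integral_zero]
    intro t ht
    rw [uIcc_of_le (by linarith)] at ht
    have : χ t = 1 := by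
      have h1 : 1 ≤ (1 - e - t) / e := by rw [le_div_iff₀ he0]; linarith [ht.2]
      simp [χ, h1]
    simp [this]
  rw [hzero, zero_add]
  have := intervalIntegral.norm_integral_le_of_norm_le_const (a := 1 - 2 * e) (b := 1) (C := m)
    (f := fun t => ((1 - χ t) • M t) i j) fun t ht => by
      rw [uIoc_of_le (by linarith)] at ht
      rw [Matrix.smul_apply, smul_eq_mul, norm_mul, Real.norm_eq_abs, Real.norm_eq_abs,
        abs_of_nonneg (sub_nonneg.2 (hχ1 t))]
      have h1 := hmij t ⟨by linarith [ht.1], ht.2⟩ i j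
      nlinarith [hχ0 t, hχ1 t, abs_nonneg (M t i j)]
  rw [Real.norm_eq_abs] at this
  refine this.trans ?_
  rw [show |1 - (1 - 2 * e)| = 2 * e by rw [sub_sub_cancel, abs_of_pos (by linarith)]]
  exact heη

/-! ### Steering the driftless equation -/

/-- Steering for `S' = M + C U + (C U)ᵀ`. The solution is
`S = G (S₀ + ∫ χ M) Gᵀ + ∫ (1 - χ) M + (1 - G) S₁' (1 - G)ᵀ`, where `G` is the Gramian from `t` to
`1` normalised to `G 0 = 1`. It equals `1` as long as `χ ≠ 0`, is invertible before time `1`, and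
vanishes at time `1`. -/
theorem exists_steering {C : ℝ → Matrix (Fin n) (Fin p) ℝ} (hC : Continuous C)
    (hnd : ∀ c, 0 ≤ c → c < 1 → ∀ w, (∀ t ∈ Ioo c 1, w ᵥ* C t = 0) → w = 0)
    {M : ℝ → Matrix (Fin n) (Fin n) ℝ} (hM : Continuous M) (hpsd : ∀ t, (M t).PosSemidef)
    {S₀ S₁ : Matrix (Fin n) (Fin n) ℝ} (hS₀ : S₀.PosDef) (hS₁ : S₁.PosDef) :
    ∃ (U : ℝ → Matrix (Fin p) (Fin n) ℝ) (S : ℝ → Matrix (Fin n) (Fin n) ℝ),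
      Continuous U ∧ S 0 = S₀ ∧ S 1 = S₁ ∧ (∀ t ∈ Icc (0 : ℝ) 1, (S t).PosDef) ∧
      ∀ t ∈ Icc (0 : ℝ) 1, MDeriv S (M t + C t * U t + (C t * U t)ᵀ) t := by
  obtain ⟨c, χ, hc0, hc1, hχ, hχ0, hχ1, hχc, hS₁'⟩ := exists_cutoff hM hpsd hS₁
  have hX₁ : Continuous fun t => χ t • M t := by fun_prop
  have hX₂ : Continuous fun t => (1 - χ t) • M t := by fun_prop
  have hR : Continuous fun τ => max 0 (τ - c) • (C τ * (C τ)ᵀ) := by fun_prop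
  set R := fun τ => max 0 (τ - c) • (C τ * (C τ)ᵀ) with hRdef
  set P₁ := prim (fun t => χ t • M t) 0
  set P₂ := prim (fun t => (1 - χ t) • M t) 0
  set S₁' := S₁ - P₂ 1
  have hP₁ : ∀ t, 0 ≤ t → (P₁ t).PosSemidef := fun t ht =>
    posSemidef_prim hX₁ (fun t => (hpsd t).smul (hχ0 t)) ht
  have hP₂ : ∀ t, 0 ≤ t → (P₂ t).PosSemidef := fun t ht =>
    posSemidef_prim hX₂ (fun t => (hpsd t).smul (sub_nonneg.2 (hχ1 t))) ht
  set W := fun t => prim R t 1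
  have hWpd : ∀ t, t < 1 → (W t).PosDef := fun t ht => posDef_gramian hC hnd hc0 hc1 ht
  have hWeq : ∀ t, W t = prim R 0 1 - prim R 0 t := fun t => (prim_sub_prim hR 0 t 1).symm
  have hWc : Continuous W := by
    rw [funext hWeq]; exact continuous_const.sub (continuous_prim hR 0)
  have hWd : ∀ t, MDeriv W (-R t) t := fun t => by
    have := (MDeriv.const (t := t) (prim R 0 1)).sub (mderiv_prim hR 0 t)
    rw [zero_sub] at this
    rwa [funext hWeq]
  have hdet : IsUnit (W 0).det := (hWpd 0 one_pos).isUnit.map detMonoidHom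
  set J : ℝ → Matrix (Fin p) (Fin n) ℝ := fun t => -(max 0 (t - c) • ((C t)ᵀ * (W 0)⁻¹)) with hJ
  have hJc : Continuous J := by fun_prop
  set G := fun t => W t * (W 0)⁻¹
  have hGc : Continuous G := hWc.matrix_mul continuous_const
  have hGd : ∀ t, MDeriv G (C t * J t) t := fun t => by
    have := (hWd t).mul (MDeriv.const (t := t) (W 0)⁻¹)
    convert this using 1
    simp [hJ, hRdef, Matrix.mul_assoc]
  have hHd : ∀ t, MDeriv (fun t => 1 - G t) (-(C t * J t)) t := fun t => by
    simpa using (MDeriv.const (t := t) (1 : Matrix (Fin n) (Fin n) ℝ)).sub (hGd t)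
  have hG1 : G 1 = 0 := by simp [G, W, prim_self]
  have hGone : ∀ t, 0 ≤ t → t ≤ c → G t = 1 := fun t ht0 htc => by
    have : prim R 0 t = 0 := by
      ext i j
      simp only [prim, of_apply, Matrix.zero_apply]
      rw [intervalIntegral.integral_congr (g := fun _ => (0 : ℝ)), intervalIntegral.integral_zero]
      intro τ hτ
      rw [uIcc_of_le ht0] at hτ
      simp [hRdef, max_eq_left (show τ - c ≤ 0 by linarith [hτ.2])]
    have hW : W t = W 0 := by rw [hWeq t, hWeq 0, this, prim_self]
    simp only [G, hW]
    exact Matrix.mul_nonsing_inv _ hdet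
  have hTd : ∀ t, MDeriv (fun t => S₀ + P₁ t) (χ t • M t) t := fun t => by
    simpa using (MDeriv.const (t := t) S₀).add (mderiv_prim hX₁ 0 t)
  have hsym : ∀ {X : Matrix (Fin n) (Fin n) ℝ}, X.IsHermitian → Xᵀ = X := fun {X} h => by
    rw [← conjTranspose_eq_transpose_of_trivial]; exact h
  refine ⟨fun t => J t * (S₀ + P₁ t) * (G t)ᵀ - J t * S₁' * (1 - G t)ᵀ,
    fun t => G t * (S₀ + P₁ t) * (G t)ᵀ + P₂ t + (1 - G t) * S₁' * (1 - G t)ᵀ,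
    ?_, ?_, ?_, fun t ht => ?_, fun t ht => ?_⟩
  · have := continuous_prim hX₁ 0
    change Continuous P₁ at this
    fun_prop
  · simp [hGone 0 le_rfl hc0, P₁, P₂, prim_self]
  · simp [hG1, S₁']
  · have hpsd' : ((1 - G t) * S₁' * (1 - G t)ᵀ).PosSemidef := by
      simpa only [conjTranspose_eq_transpose_of_trivial] using
        hS₁'.posSemidef.mul_mul_conjTranspose_same (1 - G t)
    have hTpd : (S₀ + P₁ t).PosDef := hS₀.add_posSemidef (hP₁ t ht.1)
    rcases ht.2.lt_or_eq with h1 | rfl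
    · have hGu : IsUnit (G t) := by
        refine (hWpd t h1).isUnit.mul ?_
        exact (Matrix.isUnit_nonsing_inv_iff).2 (hWpd 0 one_pos).isUnit
      have : (G t * (S₀ + P₁ t) * (G t)ᵀ).PosDef := by
        simpa [conjTranspose_eq_transpose_of_trivial] using
          hTpd.mul_mul_conjTranspose_same (Matrix.vecMul_injective_of_isUnit hGu)
      exact (this.add_posSemidef (hP₂ t ht.1)).add_posSemidef hpsd'
    -- at the endpoint `G` vanishes, and the sum is `S₁` itself
    · simpa [hG1, S₁'] using hS₁
  · have hd := ((((hGd t).mul (hTd t)).mul (hGd t).transpose).add (mderiv_prim hX₂ 0 t)).add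
      (((hHd t).mul (MDeriv.const (t := t) S₁')).mul (hHd t).transpose)
    convert hd using 1
    have hTs : (S₀ + P₁ t)ᵀ = S₀ + P₁ t := hsym (hS₀.add_posSemidef (hP₁ t ht.1)).isHermitian
    have hSs : S₁'ᵀ = S₁' := hsym hS₁'.isHermitian
    -- the noise `χ M` passes through `G` unchanged, since `G t = 1` wherever `χ t ≠ 0`
    have hGM : G t * (χ t • M t) * (G t)ᵀ = χ t • M t := by
      rcases le_total t c with h | h
      · simp [hGone t ht.1 h]
      · simp [hχc t h]
    have hMs : M t = χ t • M t + (1 - χ t) • M t := by rw [← add_smul]; simp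
    rw [Matrix.add_mul _ _ (G t)ᵀ, hGM]
    nth_rewrite 1 [hMs]
    simp only [Matrix.transpose_mul, Matrix.transpose_sub, Matrix.mul_sub, Matrix.sub_mul,
      Matrix.transpose_transpose, Matrix.transpose_neg, Matrix.mul_neg, Matrix.neg_mul,
      hTs, hSs, Matrix.mul_assoc, Matrix.mul_zero, add_zero]
    abel

end Posdef

/-! ### Consequences of uniform controllability -/

section Controllability

variable {n p : ℕ}

theorem eq_zero_of_vecMul_eq_zero_of_rank {ι : Type*} [Fintype ι]
    {T : Matrix (Fin n) ι ℝ} (hT : T.rank = n) {w : Fin n → ℝ} (hw : w ᵥ* T = 0) : w = 0 := by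
  have hr : Module.finrank ℝ (LinearMap.range Tᵀ.mulVecLin) = n :=
    (Matrix.rank_transpose T).trans hT
  have hk := LinearMap.finrank_range_add_finrank_ker Tᵀ.mulVecLin
  rw [hr, Module.finrank_fin_fun, Nat.add_eq_left, Submodule.finrank_eq_zero] at hk
  have : w ∈ LinearMap.ker Tᵀ.mulVecLin := by
    rw [LinearMap.mem_ker, Matrix.mulVecLin_apply, Matrix.mulVec_transpose, hw]
  rwa [hk, Submodule.mem_bot] at this

/-- Since `(Z Γₖ)' = Z Γₖ₊₁ - ν Z Γₖ`, a covector annihilating `Z Γ₀` on an interval annihilates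
every `Z Γₖ` there. -/
theorem vecMul_chain_eq_zero {A : ℝ → Matrix (Fin n) (Fin n) ℝ} {ν : ℝ → ℝ}
    {Γ : ℕ → ℝ → Matrix (Fin n) (Fin p) ℝ} {Z : ℝ → Matrix (Fin n) (Fin n) ℝ}
    (hZ : ∀ t ∈ Icc (0 : ℝ) 1, MDeriv Z (-(Z t * (A t + ν t • 1))) t)
    (hΓ : ∀ k < n, ∀ t ∈ Icc (0 : ℝ) 1, MDeriv (Γ k) (Γ (k + 1) t + A t * Γ k t) t)
    {c : ℝ} (hc : 0 ≤ c) {w : Fin n → ℝ} (h0 : ∀ t ∈ Ioo c 1, w ᵥ* (Z t * Γ 0 t) = 0) :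
    ∀ k ≤ n, ∀ t ∈ Ioo c 1, w ᵥ* (Z t * Γ k t) = 0 := by
  intro k
  induction k with
  | zero => exact fun _ => h0
  | succ k ih =>
    intro hk t ht
    have ih := ih (by omega)
    have htI : t ∈ Icc (0 : ℝ) 1 := ⟨hc.trans ht.1.le, ht.2.le⟩
    have hrow : ∀ (X : Matrix (Fin n) (Fin p) ℝ) j,
        (replicateRow (Fin 1) w * X) 0 j = (w ᵥ* X) j := fun X j => rfl
    ext j
    have hd := (MDeriv.const (t := t) (replicateRow (Fin 1) w)).mul
      ((hZ t htI).mul (hΓ k (by omega) t htI)) 0 j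
    have hval : ((0 : Matrix (Fin 1) (Fin n) ℝ) * (Z t * Γ k t) + replicateRow (Fin 1) w *
        (-(Z t * (A t + ν t • 1)) * Γ k t + Z t * (Γ (k + 1) t + A t * Γ k t))) =
        replicateRow (Fin 1) w * (Z t * Γ (k + 1) t) -
          ν t • (replicateRow (Fin 1) w * (Z t * Γ k t)) := by
      simp only [Matrix.zero_mul, zero_add, Matrix.mul_add, Matrix.add_mul, Matrix.neg_mul,
        Matrix.mul_assoc, Matrix.mul_neg, Matrix.smul_mul, Matrix.mul_smul, Matrix.one_mul]
      abel
    rw [hval, Matrix.sub_apply, Matrix.smul_apply, hrow, hrow, ih t ht] at hd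
    simp only [hrow, Pi.zero_apply, smul_zero, sub_zero] at hd
    have hd' := hd.hasDerivAt (Icc_mem_nhds (hc.trans_lt ht.1) ht.2)
    have hz : HasDerivAt (fun τ => (w ᵥ* (Z τ * Γ k τ)) j) 0 t :=
      (hasDerivAt_const t (0 : ℝ)).congr_of_eventuallyEq
        (Filter.eventually_of_mem (Ioo_mem_nhds ht.1 ht.2) fun τ hτ => by simp [ih τ hτ])
    exact hd'.unique hz

end Controllability

theorem stmt_19 {n p : ℕ} (hn : 1 ≤ n) (hp : 1 ≤ p)
    (A : ℝ → Matrix (Fin n) (Fin n) ℝ) (B : ℝ → Matrix (Fin n) (Fin p) ℝ)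
    (hAsm : ∀ i j, ContDiffOn ℝ (n - 1 : ℕ) (fun t => A t i j) (Set.Icc 0 1))
    (hBsm : ∀ i j, ContDiffOn ℝ (n : ℕ) (fun t => B t i j) (Set.Icc 0 1))
    (Γ : ℕ → ℝ → Matrix (Fin n) (Fin p) ℝ)
    (hΓ0 : Γ 0 = B)
    (hΓ : ∀ k < n, ∀ t ∈ Set.Icc (0:ℝ) 1, ∀ (i : Fin n) (j : Fin p),
      HasDerivWithinAt (fun τ : ℝ => Γ k τ i j) ((Γ (k + 1) t + A t * Γ k t) i j)
        (Set.Icc (0:ℝ) 1) t)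
    -- uniform controllability on [0,1]
    (hUC : ∀ t ∈ Set.Icc (0:ℝ) 1, (thetaMat Γ n t).rank = n)
    -- index invariance on [0,1]
    (hII₁ : ∀ i, 1 ≤ i → i ≤ n + 1 → ∃ r : ℕ, ∀ t ∈ Set.Icc (0:ℝ) 1,
      (thetaMat Γ i t).rank = r)
    (hII₂ : ∀ t ∈ Set.Icc (0:ℝ) 1, (thetaMat Γ n t).rank = (thetaMat Γ (n + 1) t).rank)
    (N : ℝ → Matrix (Fin n) (Fin n) ℝ) (ν : ℝ → ℝ)
    (hN : ∀ i j, ContDiffOn ℝ (max (n - 2) 0 : ℕ) (fun t => N t i j) (Set.Icc 0 1))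
    (hν : ContDiffOn ℝ (max (n - 2) 0 : ℕ) ν (Set.Icc 0 1))
    (hNpsd : ∀ t ∈ Set.Icc (0:ℝ) 1, (N t).PosSemidef)
    (hνpos : ∀ t ∈ Set.Icc (0:ℝ) 1, 0 ≤ ν t)
    (Sig0 Sig1 : Matrix (Fin n) (Fin n) ℝ) (hSig0 : Sig0.PosDef) (hSig1 : Sig1.PosDef) :
    ∃ (K : ℝ → Matrix (Fin p) (Fin n) ℝ) (E : Finset ℝ),
      -- `K` is bounded on `[0,1]`
      (∃ c : ℝ, ∀ t ∈ Set.Icc (0:ℝ) 1, ∀ i j, |K t i j| ≤ c) ∧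
      -- `K` is piecewise continuous: continuous off the finite set `E`
      ContinuousOn K (Set.Icc (0:ℝ) 1 \ ↑E) ∧
      ∃ S : ℝ → Matrix (Fin n) (Fin n) ℝ,
        ContinuousOn S (Set.Icc (0:ℝ) 1) ∧
        S 0 = Sig0 ∧ S 1 = Sig1 ∧
        (∀ t ∈ Set.Icc (0:ℝ) 1, (S t).PosDef) ∧
        ∀ t ∈ Set.Icc (0:ℝ) 1 \ ↑E, ∀ (i j : Fin n),
          HasDerivWithinAt (fun τ : ℝ => S τ i j)
            (((A t + B t * K t) * S t + S t * (A t + B t * K t)ᵀ +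
              N t + (2 * ν t) • S t) i j)
            (Set.Icc (0:ℝ) 1) t := by
  have hAc : ContinuousOn A (Icc (0 : ℝ) 1) :=
    continuousOn_pi.2 fun i => continuousOn_pi.2 fun j => (hAsm i j).continuousOn
  have hBc : ContinuousOn B (Icc (0 : ℝ) 1) :=
    continuousOn_pi.2 fun i => continuousOn_pi.2 fun j => (hBsm i j).continuousOn
  have hNc : ContinuousOn N (Icc (0 : ℝ) 1) :=
    continuousOn_pi.2 fun i => continuousOn_pi.2 fun j => (hN i j).continuousOn
  -- the data are extended continuously to `ℝ` by composing with the retraction onto `[0,1]`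
  let π : ℝ → ℝ := fun t => projIcc (0 : ℝ) 1 zero_le_one t
  have hπc : Continuous π := continuous_subtype_val.comp continuous_projIcc
  have hπm : ∀ t, π t ∈ Icc (0 : ℝ) 1 := fun t => (projIcc (0 : ℝ) 1 zero_le_one t).2
  have hπ : ∀ t ∈ Icc (0 : ℝ) 1, π t = t := fun t ht => by
    simp only [π, projIcc_of_mem zero_le_one ht]
  have hAπ : Continuous fun t => A (π t) := hAc.comp_continuous hπc hπm
  have hBπ : Continuous fun t => B (π t) := hBc.comp_continuous hπc hπm
  have hNπ : Continuous fun t => N (π t) := hNc.comp_continuous hπc hπm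
  have hνπ : Continuous fun t => ν (π t) := hν.continuousOn.comp_continuous hπc hπm
  obtain ⟨Y, Z, hY0, hZ0, hY, hZ, hZY, hYZ⟩ := exists_fundamental_pair
    (fun t => A (π t) + ν (π t) • (1 : Matrix (Fin n) (Fin n) ℝ))
    (hAπ.add (hνπ.smul continuous_const))
  replace hY : ∀ t ∈ Icc (0 : ℝ) 1, MDeriv Y ((A t + ν t • 1) * Y t) t := fun t ht => by
    simpa only [hπ t ht] using hY t ht
  replace hZ : ∀ t ∈ Icc (0 : ℝ) 1, MDeriv Z (-(Z t * (A t + ν t • 1))) t := fun t ht => by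
    simpa only [hπ t ht] using hZ t ht
  have hYc := MDeriv.continuousOn hY
  have hZπ : Continuous fun t => Z (π t) := (MDeriv.continuousOn hZ).comp_continuous hπc hπm
  have hconj : ∀ {V X : Matrix (Fin n) (Fin n) ℝ}, IsUnit V → X.PosDef → (V * X * Vᵀ).PosDef :=
    fun {V X} hV hX => by
      simpa only [conjTranspose_eq_transpose_of_trivial] using
        hX.mul_mul_conjTranspose_same (Matrix.vecMul_injective_of_isUnit hV)
  have hYu : ∀ t ∈ Icc (0 : ℝ) 1, IsUnit (Y t) := fun t ht =>
    IsUnit.of_mul_eq_one _ (hYZ t ht)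
  have hZu : ∀ t ∈ Icc (0 : ℝ) 1, IsUnit (Z t) := fun t ht =>
    IsUnit.of_mul_eq_one _ (hZY t ht)
  have h1mem : (1 : ℝ) ∈ Icc (0 : ℝ) 1 := by simp
  have hcancel : ∀ t ∈ Icc (0 : ℝ) 1, ∀ X : Matrix (Fin n) (Fin n) ℝ,
      Y t * (Z t * X * (Z t)ᵀ) * (Y t)ᵀ = X := fun t ht X => by
    have h2 : (Z t)ᵀ * (Y t)ᵀ = 1 := by rw [← Matrix.transpose_mul, hYZ t ht, transpose_one]
    calc Y t * (Z t * X * (Z t)ᵀ) * (Y t)ᵀ = (Y t * Z t) * X * ((Z t)ᵀ * (Y t)ᵀ) := by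
          simp only [Matrix.mul_assoc]
      _ = X := by rw [hYZ t ht, h2, Matrix.one_mul, Matrix.mul_one]
  obtain ⟨U, S, hUc, hS0, hS1, hSpd, hSd⟩ := exists_steering
    (C := fun t => Z (π t) * B (π t)) (M := fun t => Z (π t) * N (π t) * (Z (π t))ᵀ)
    (S₀ := Sig0) (S₁ := Z 1 * Sig1 * (Z 1)ᵀ)
    (hZπ.matrix_mul hBπ)
    (fun c hc0 hc1 w hw => by
      have hchain := vecMul_chain_eq_zero hZ hΓ hc0 (w := w) (fun t ht => by
        have := hw t ht
        simp only [hπ t ⟨hc0.trans ht.1.le, ht.2.le⟩] at this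
        rw [hΓ0]; exact this)
      obtain ⟨t, ht⟩ := nonempty_Ioo.2 hc1
      have htI : t ∈ Icc (0 : ℝ) 1 := ⟨hc0.trans ht.1.le, ht.2.le⟩
      have hwZ : w ᵥ* Z t = 0 := by
        refine eq_zero_of_vecMul_eq_zero_of_rank (hUC t htI) ?_
        ext ⟨k, j⟩
        have := congrFun (hchain k k.2.le t ht) j
        rw [← Matrix.vecMul_vecMul] at this
        exact this
      have : w ᵥ* (Z t * Y t) = 0 := by rw [← Matrix.vecMul_vecMul, hwZ, Matrix.zero_vecMul]
      rwa [hZY t htI, Matrix.vecMul_one] at this)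
    ((hZπ.matrix_mul hNπ).matrix_mul hZπ.matrix_transpose)
    (fun t => by
      simpa only [conjTranspose_eq_transpose_of_trivial] using
        (hNpsd _ (hπm t)).mul_mul_conjTranspose_same (Z (π t)))
    hSig0 (hconj (hZu 1 h1mem) hSig1)
  -- back to the original coordinates; `K` is chosen so that `K T = U Yᵀ`
  let T : ℝ → Matrix (Fin n) (Fin n) ℝ := fun t => Y t * S t * (Y t)ᵀ
  let K : ℝ → Matrix (Fin p) (Fin n) ℝ := fun t => U t * (Y t)ᵀ * (T t)⁻¹
  have hTpd : ∀ t ∈ Icc (0 : ℝ) 1, (T t).PosDef := fun t ht => hconj (hYu t ht) (hSpd t ht)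
  have hTdet : ∀ t ∈ Icc (0 : ℝ) 1, (T t).det ≠ 0 := fun t ht => (hTpd t ht).det_pos.ne'
  have hYtc : ContinuousOn (fun t => (Y t)ᵀ) (Icc (0 : ℝ) 1) :=
    MDeriv.continuousOn fun t ht => (hY t ht).transpose
  have hTc : ContinuousOn T (Icc (0 : ℝ) 1) :=
    continuousOn_matrix_mul (continuousOn_matrix_mul hYc (MDeriv.continuousOn hSd)) hYtc
  have hKc : ContinuousOn K (Icc (0 : ℝ) 1) :=
    continuousOn_matrix_mul (continuousOn_matrix_mul hUc.continuousOn hYtc) (continuousOn_matrix_inv hTc hTdet)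
  refine ⟨K, ∅, ?_, by simpa using hKc, T, hTc, by simp [T, hY0, hS0], ?_, hTpd, ?_⟩
  · have hcij : ∀ i j, ∃ c : ℝ, ∀ t ∈ Icc (0 : ℝ) 1, |K t i j| ≤ c := fun i j =>
      isCompact_Icc.exists_bound_of_continuousOn
        (continuousOn_pi.1 (continuousOn_pi.1 hKc i) j)
    choose c hc using hcij
    refine ⟨∑ i, ∑ j, |c i j|, fun t ht i j => (hc i j t ht).trans ((le_abs_self _).trans ?_)⟩
    exact (Finset.single_le_sum (f := fun j => |c i j|) (fun _ _ => abs_nonneg _)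
      (Finset.mem_univ j)).trans (Finset.single_le_sum (f := fun i => ∑ j, |c i j|)
        (fun i _ => Finset.sum_nonneg fun j _ => abs_nonneg _) (Finset.mem_univ i))
  · simp only [T, hS1]
    exact hcancel 1 h1mem Sig1
  · intro t ht
    replace ht : t ∈ Icc (0 : ℝ) 1 := ht.1
    have hd := ((hY t ht).mul (hSd t ht)).mul (hY t ht).transpose
    change MDeriv T _ t
    convert hd using 1
    simp only [hπ t ht]
    have hKT : K t * T t = U t * (Y t)ᵀ := by
      simp only [K]
      rw [Matrix.mul_assoc, Matrix.nonsing_inv_mul _ (hTdet t ht).isUnit, Matrix.mul_one]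
    have hTs : (T t)ᵀ = T t := by
      rw [← conjTranspose_eq_transpose_of_trivial]; exact (hTpd t ht).isHermitian
    have hBK : B t * K t * T t = Y t * (Z t * B t * U t) * (Y t)ᵀ := by
      rw [Matrix.mul_assoc, hKT]
      calc B t * (U t * (Y t)ᵀ) = (Y t * Z t) * (B t * (U t * (Y t)ᵀ)) := by
            rw [hYZ t ht, Matrix.one_mul]
        _ = _ := by simp only [Matrix.mul_assoc]
    have hTBK : T t * (B t * K t)ᵀ = Y t * (Z t * B t * U t)ᵀ * (Y t)ᵀ := by
      have := congrArg Matrix.transpose hBK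
      rw [Matrix.transpose_mul, hTs] at this
      rw [this]
      simp only [Matrix.transpose_mul, Matrix.transpose_transpose, Matrix.mul_assoc]
    have hlin : (A t + B t * K t) * T t + T t * (A t + B t * K t)ᵀ + N t + (2 * ν t) • T t =
        A t * T t + T t * (A t)ᵀ + (2 * ν t) • T t + N t +
          (B t * K t * T t + T t * (B t * K t)ᵀ) := by
      rw [Matrix.add_mul, Matrix.transpose_add, Matrix.mul_add]
      abel
    rw [hlin, hBK, hTBK, two_mul, add_smul]
    nth_rewrite 1 [← hcancel t ht (N t)]
    simp only [T, Matrix.transpose_mul, Matrix.transpose_add, Matrix.transpose_smul,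
      Matrix.mul_add, Matrix.add_mul, Matrix.smul_mul, Matrix.mul_smul,
      Matrix.one_mul, Matrix.mul_assoc]
    abel
end
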